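/- arXiv:1803.11073 — 2 statements merged into one kernel-verified Lean document; each statement's English description precedes it below -/
import Mathlib

section
/- Let X be an infinite separable locally compact metric space and let f : X → X be a continuous map. Suppose f is topologically transitive and for every nonempty open set U ⊆ X the set N(U, U) contains two consecutive positive integers. Then for every pair of nonempty open sets U, V ⊆ X the set N(U, V) contains two consecutive positive integers. -/
/-- `NSet f U V` is the set `N(U,V) = {n ≥ 1 : fⁿ(U) ∩ V ≠ ∅}`. -/
def NSet {X : Type*} (f : X → X) (U V : Set X) : Set ℕ :=
  {n : ℕ | 1 ≤ n ∧ (f^[n] '' U ∩ V).Nonempty}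

/-- `f` is (topologically) transitive. -/
def TopTransitive {X : Type*} [TopologicalSpace X] (f : X → X) : Prop :=
  ∀ U V : Set X, IsOpen U → IsOpen V → U.Nonempty → V.Nonempty → (NSet f U V).Nonempty

section NSet

variable {X : Type*} {f : X → X} {U U' V V' : Set X} {k m n : ℕ}

theorem mem_NSet_iff : n ∈ NSet f U V ↔ 1 ≤ n ∧ (U ∩ f^[n] ⁻¹' V).Nonempty :=
  and_congr_right fun _ => Set.image_inter_nonempty_iff

theorem NSet_mono (hU : U ⊆ U') (hV : V ⊆ V') : NSet f U V ⊆ NSet f U' V' :=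
  fun _ ⟨hn, hne⟩ => ⟨hn, hne.mono (Set.inter_subset_inter (Set.image_mono hU) hV)⟩

theorem add_mem_NSet_of_mem_NSet_preimage (hm : m ∈ NSet f U (f^[k] ⁻¹' V)) :
    k + m ∈ NSet f U V := by
  rw [mem_NSet_iff, ← Set.preimage_comp, ← Function.iterate_add] at hm
  exact mem_NSet_iff.2 ⟨le_add_left hm.1, hm.2⟩

theorem TopTransitive.exists_add_mem_NSet [TopologicalSpace X] (htrans : TopTransitive f)
    (hf : Continuous f) (hU : IsOpen U) (hV : IsOpen V) (hUne : U.Nonempty) (hVne : V.Nonempty) :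
    ∃ W : Set X, IsOpen W ∧ W.Nonempty ∧ ∃ k : ℕ, ∀ m ∈ NSet f W W, k + m ∈ NSet f U V := by
  obtain ⟨k, hk⟩ := htrans U V hU hV hUne hVne
  -- The points of `W = U ∩ f⁻ᵏ(V)` returning to `W` at time `m` are in `V` at time `k + m`.
  refine ⟨U ∩ f^[k] ⁻¹' V, hU.inter (hV.preimage (hf.iterate k)), (mem_NSet_iff.1 hk).2, k, ?_⟩
  exact fun m hm => add_mem_NSet_of_mem_NSet_preimage
    (NSet_mono Set.inter_subset_left Set.inter_subset_right hm)

end NSet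

theorem consecutive_NUV_of_transitive_general {X : Type*} [TopologicalSpace X]
    (f : X → X) (hf : Continuous f) (htrans : TopTransitive f)
    (hcons : ∀ U : Set X, IsOpen U → U.Nonempty →
      ∃ n : ℕ, 1 ≤ n ∧ n ∈ NSet f U U ∧ n + 1 ∈ NSet f U U) :
    ∀ U V : Set X, IsOpen U → IsOpen V → U.Nonempty → V.Nonempty →
      ∃ n : ℕ, 1 ≤ n ∧ n ∈ NSet f U V ∧ n + 1 ∈ NSet f U V := by
  intro U V hU hV hUne hVne
  obtain ⟨W, hW, hWne, k, hshift⟩ := htrans.exists_add_mem_NSet hf hU hV hUne hVne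
  obtain ⟨n, hn, hret, hret_succ⟩ := hcons W hW hWne
  exact ⟨k + n, le_add_left hn, hshift n hret, hshift (n + 1) hret_succ⟩

theorem consecutive_NUV_of_transitive {X : Type*} [MetricSpace X] [Infinite X]
    [TopologicalSpace.SeparableSpace X] [LocallyCompactSpace X]
    (f : X → X) (hf : Continuous f) (htrans : TopTransitive f)
    (hcons : ∀ U : Set X, IsOpen U → U.Nonempty →
      ∃ n : ℕ, 1 ≤ n ∧ n ∈ NSet f U U ∧ n + 1 ∈ NSet f U U) :
    ∀ U V : Set X, IsOpen U → IsOpen V → U.Nonempty → V.Nonempty →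
      ∃ n : ℕ, 1 ≤ n ∧ n ∈ NSet f U V ∧ n + 1 ∈ NSet f U V :=
  consecutive_NUV_of_transitive_general f hf htrans hcons
end

section
/- Let X be an infinite separable locally compact metric space and let f : X → X be a continuous weakly mixing map. Let n ≥ 1, let K₁, …, Kₙ ⊆ X be compact sets with nonempty interiors, and let V₁, …, Vₙ ⊆ X be nonempty open sets. Then for every L ≥ 1 there exist L consecutive positive integers m+1, m+2, …, m+L such that for each k in {m+1, …, m+L} and each 1 ≤ j ≤ n there is a compact set K_{k,j} ⊆ K_j with nonempty interior satisfying fᵏ(K_{k,j}) ⊆ V_j. -/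
/-!
By Furstenberg's argument, the hitting times `N(U, V)` of a weakly mixing map, with `U` and `V` open
and nonempty, form a filter base: if `k` lies in both `N(U₁, U₂)` and `N(V₁, V₂)`, then
`N(U₁ ∩ f⁻ᵏ U₂, V₁ ∩ f⁻ᵏ V₂) ⊆ N(U₁, V₁) ∩ N(U₂, V₂)`. So finitely many pairs have a common hitting
time. Applied to the pairs `(Uⱼ, f⁻ⁱ Vⱼ)` for `1 ≤ i ≤ L`, whose second entries are nonempty because
`f` has dense range, this gives an `m` such that `m + 1, …, m + L` are hitting times of every
`(Uⱼ, Vⱼ)`. With `Uⱼ` the interior of `Kⱼ`, a point of `Uⱼ ∩ f⁻ᵏ Vⱼ` has a compact neighbourhood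
inside that open set.
-/

/-- `f` is (topologically) weakly mixing. -/
def WeaklyMixing {X : Type*} [TopologicalSpace X] (f : X → X) : Prop :=
  ∀ U₁ U₂ V₁ V₂ : Set X, IsOpen U₁ → IsOpen U₂ → IsOpen V₁ → IsOpen V₂ →
    U₁.Nonempty → U₂.Nonempty → V₁.Nonempty → V₂.Nonempty →
    ∃ n : ℕ, 1 ≤ n ∧ (f^[n] '' U₁ ∩ V₁).Nonempty ∧ (f^[n] '' U₂ ∩ V₂).Nonempty

open Set

/-- The set `N(U, V)` of times `n ≥ 0` at which the orbit of some point of `U` meets `V`. Weak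
mixing says that any two of these sets, for nonempty open `U` and `V`, share a positive element. -/
def hittingTimes {X : Type*} (f : X → X) (U V : Set X) : Set ℕ :=
  {n | (f^[n] '' U ∩ V).Nonempty}

theorem mem_hittingTimes_iff {X : Type*} {f : X → X} {U V : Set X} {n : ℕ} :
    n ∈ hittingTimes f U V ↔ (U ∩ f^[n] ⁻¹' V).Nonempty :=
  image_inter_nonempty_iff

theorem mem_hittingTimes_preimage_iterate_iff {X : Type*} {f : X → X} {U V : Set X} {m i : ℕ} :
    m ∈ hittingTimes f U (f^[i] ⁻¹' V) ↔ m + i ∈ hittingTimes f U V := by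
  rw [mem_hittingTimes_iff, mem_hittingTimes_iff, add_comm m i, Function.iterate_add,
    preimage_comp]

theorem hittingTimes_inter_preimage_iterate_subset {X : Type*} (f : X → X) (U₁ U₂ V₁ V₂ : Set X)
    (k : ℕ) :
    hittingTimes f (U₁ ∩ f^[k] ⁻¹' U₂) (V₁ ∩ f^[k] ⁻¹' V₂) ⊆
      hittingTimes f U₁ V₁ ∩ hittingTimes f U₂ V₂ := by
  rintro n ⟨_, ⟨x, ⟨hxU₁, hxU₂⟩, rfl⟩, hxV₁, hxV₂⟩
  refine ⟨⟨f^[n] x, mem_image_of_mem _ hxU₁, hxV₁⟩, f^[n] (f^[k] x), mem_image_of_mem _ hxU₂, ?_⟩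
  rwa [(Function.Commute.refl f).iterate_iterate n k x]

namespace WeaklyMixing

variable {X : Type*} [TopologicalSpace X] {f : X → X}

theorem hittingTimes_nonempty (hwm : WeaklyMixing f) {U V : Set X} (hU : IsOpen U) (hV : IsOpen V)
    (hUne : U.Nonempty) (hVne : V.Nonempty) : (hittingTimes f U V).Nonempty :=
  let ⟨n, _, hn, _⟩ := hwm U U V V hU hU hV hV hUne hUne hVne hVne
  ⟨n, hn⟩

theorem denseRange (hwm : WeaklyMixing f) : DenseRange f := by
  refine dense_iff_inter_open.2 fun V hV hVne => ?_
  obtain ⟨n, hn, ⟨_, ⟨x, -, rfl⟩, hx⟩, -⟩ := hwm V V V V hV hV hV hV hVne hVne hVne hVne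
  obtain ⟨k, rfl⟩ := Nat.exists_eq_add_of_le' hn
  exact ⟨_, hx, f^[k] x, (Function.iterate_succ_apply' f k x).symm⟩

theorem denseRange_iterate (hwm : WeaklyMixing f) (hf : Continuous f) (n : ℕ) :
    DenseRange f^[n] := by
  induction n with
  | zero => exact denseRange_id
  | succ n ih => exact ih.comp hwm.denseRange (hf.iterate n)

theorem exists_hittingTimes_subset_inter (hwm : WeaklyMixing f) (hf : Continuous f)
    {U₁ U₂ V₁ V₂ : Set X} (hU₁ : IsOpen U₁) (hU₂ : IsOpen U₂) (hV₁ : IsOpen V₁) (hV₂ : IsOpen V₂)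
    (hU₁ne : U₁.Nonempty) (hU₂ne : U₂.Nonempty) (hV₁ne : V₁.Nonempty) (hV₂ne : V₂.Nonempty) :
    ∃ A B : Set X, IsOpen A ∧ IsOpen B ∧ A.Nonempty ∧ B.Nonempty ∧
      hittingTimes f A B ⊆ hittingTimes f U₁ V₁ ∩ hittingTimes f U₂ V₂ := by
  obtain ⟨k, -, hkU, hkV⟩ := hwm U₁ V₁ U₂ V₂ hU₁ hV₁ hU₂ hV₂ hU₁ne hV₁ne hU₂ne hV₂ne
  exact ⟨U₁ ∩ f^[k] ⁻¹' U₂, V₁ ∩ f^[k] ⁻¹' V₂,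
    hU₁.inter (hU₂.preimage (hf.iterate k)), hV₁.inter (hV₂.preimage (hf.iterate k)),
    mem_hittingTimes_iff.1 hkU, mem_hittingTimes_iff.1 hkV,
    hittingTimes_inter_preimage_iterate_subset f U₁ U₂ V₁ V₂ k⟩

variable {ι : Type*} {U V : ι → Set X}

theorem exists_hittingTimes_subset_biInter (hwm : WeaklyMixing f) (hf : Continuous f)
    (hU : ∀ i, IsOpen (U i)) (hV : ∀ i, IsOpen (V i))
    (hUne : ∀ i, (U i).Nonempty) (hVne : ∀ i, (V i).Nonempty) {s : Finset ι} (hs : s.Nonempty) :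
    ∃ A B : Set X, IsOpen A ∧ IsOpen B ∧ A.Nonempty ∧ B.Nonempty ∧
      hittingTimes f A B ⊆ ⋂ i ∈ s, hittingTimes f (U i) (V i) := by
  induction hs using Finset.Nonempty.cons_induction with
  | singleton i => exact ⟨U i, V i, hU i, hV i, hUne i, hVne i, by simp⟩
  | cons i s _ _ ih =>
    obtain ⟨A, B, hA, hB, hAne, hBne, hAB⟩ := ih
    obtain ⟨A', B', hA', hB', hA'ne, hB'ne, hAB'⟩ := hwm.exists_hittingTimes_subset_inter hf
      (hU i) hA (hV i) hB (hUne i) hAne (hVne i) hBne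
    refine ⟨A', B', hA', hB', hA'ne, hB'ne, hAB'.trans ?_⟩
    simpa only [Finset.mem_cons, iInter_iInter_eq_or_left] using inter_subset_inter_right _ hAB

theorem iInter_hittingTimes_nonempty [Finite ι] (hwm : WeaklyMixing f) (hf : Continuous f)
    (hU : ∀ i, IsOpen (U i)) (hV : ∀ i, IsOpen (V i))
    (hUne : ∀ i, (U i).Nonempty) (hVne : ∀ i, (V i).Nonempty) :
    (⋂ i, hittingTimes f (U i) (V i)).Nonempty := by
  cases nonempty_fintype ι
  rcases isEmpty_or_nonempty ι with _ | _
  · simp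
  · obtain ⟨A, B, hA, hB, hAne, hBne, hAB⟩ :=
      hwm.exists_hittingTimes_subset_biInter hf hU hV hUne hVne Finset.univ_nonempty
    simpa using (hwm.hittingTimes_nonempty hA hB hAne hBne).mono hAB

theorem exists_Icc_subset_hittingTimes [Finite ι] (hwm : WeaklyMixing f) (hf : Continuous f)
    (hU : ∀ i, IsOpen (U i)) (hV : ∀ i, IsOpen (V i))
    (hUne : ∀ i, (U i).Nonempty) (hVne : ∀ i, (V i).Nonempty) (L : ℕ) :
    ∃ m : ℕ, ∀ i, Icc (m + 1) (m + L) ⊆ hittingTimes f (U i) (V i) := by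
  have hpreimage_nonempty (p : ι × Icc 1 L) : (f^[p.2] ⁻¹' V p.1).Nonempty :=
    (hwm.denseRange_iterate hf p.2).exists_mem_open (hV p.1) (hVne p.1)
  obtain ⟨m, hm⟩ := hwm.iInter_hittingTimes_nonempty hf (fun p : ι × Icc 1 L => hU p.1)
    (fun p => (hV p.1).preimage (hf.iterate p.2)) (fun p => hUne p.1) hpreimage_nonempty
  refine ⟨m, fun i k ⟨hmk, hkm⟩ => ?_⟩
  obtain ⟨d, rfl⟩ := Nat.exists_eq_add_of_le (Nat.le_of_succ_le hmk)
  have hd : d ∈ Icc 1 L := ⟨by lia, by lia⟩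
  exact mem_hittingTimes_preimage_iterate_iff.1 (mem_iInter.1 hm (i, ⟨d, hd⟩))

end WeaklyMixing

theorem exists_isCompact_subset_inter_of_isOpen {X : Type*} [TopologicalSpace X] [R1Space X]
    {K O : Set X} (hK : IsCompact K) (hO : IsOpen O) (hKO : (interior K ∩ O).Nonempty) :
    ∃ K' : Set X, IsCompact K' ∧ K' ⊆ K ∩ O ∧ (interior K').Nonempty := by
  obtain ⟨x, hxK, hxO⟩ := hKO
  have hKx : K ∈ nhds x := mem_interior_iff_mem_nhds.1 hxK
  obtain ⟨K', ⟨hK'x, hK', -⟩, hK'sub⟩ := (hK.isCompact_isClosed_basis_nhds hKx).mem_iff.1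
    (Filter.inter_mem hKx (hO.mem_nhds hxO))
  exact ⟨K', hK', hK'sub, x, mem_interior_iff_mem_nhds.2 hK'x⟩

theorem consecutive_compact_refinement_general {X ι : Type*} [TopologicalSpace X] [R1Space X]
    [Finite ι] {f : X → X} (hf : Continuous f) (hwm : WeaklyMixing f) {K V : ι → Set X}
    (hK : ∀ j, IsCompact (K j)) (hKint : ∀ j, (interior (K j)).Nonempty)
    (hV : ∀ j, IsOpen (V j)) (hVne : ∀ j, (V j).Nonempty) (L : ℕ) :
    ∃ m : ℕ, ∀ k : ℕ, m + 1 ≤ k → k ≤ m + L → ∀ j : ι,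
      ∃ K' : Set X, IsCompact K' ∧ K' ⊆ K j ∧ (interior K').Nonempty ∧ f^[k] '' K' ⊆ V j := by
  obtain ⟨m, hm⟩ := hwm.exists_Icc_subset_hittingTimes hf
    (fun _ => isOpen_interior) hV hKint hVne L
  refine ⟨m, fun k hmk hkm j => ?_⟩
  have hmeet : (interior (K j) ∩ f^[k] ⁻¹' V j).Nonempty :=
    mem_hittingTimes_iff.1 (hm j ⟨hmk, hkm⟩)
  obtain ⟨K', hK', hK'sub, hK'int⟩ :=
    exists_isCompact_subset_inter_of_isOpen (hK j) ((hV j).preimage (hf.iterate k)) hmeet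
  obtain ⟨hK'K, hK'V⟩ := subset_inter_iff.1 hK'sub
  exact ⟨K', hK', hK'K, hK'int, image_subset_iff.2 hK'V⟩

theorem consecutive_compact_refinement {X : Type*} [MetricSpace X] [Infinite X]
    [TopologicalSpace.SeparableSpace X] [LocallyCompactSpace X]
    (f : X → X) (hf : Continuous f) (hwm : WeaklyMixing f)
    (n : ℕ) (hn : 1 ≤ n) (K V : Fin n → Set X)
    (hK : ∀ j, IsCompact (K j)) (hKint : ∀ j, (interior (K j)).Nonempty)
    (hV : ∀ j, IsOpen (V j)) (hVne : ∀ j, (V j).Nonempty) :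
    ∀ L : ℕ, 1 ≤ L → ∃ m : ℕ,
      ∀ k : ℕ, m + 1 ≤ k → k ≤ m + L → ∀ j : Fin n,
        ∃ K' : Set X, IsCompact K' ∧ K' ⊆ K j ∧ (interior K').Nonempty ∧
          f^[k] '' K' ⊆ V j :=
  fun L _ => consecutive_compact_refinement_general hf hwm hK hKint hV hVne L
end
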